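/- Fix δ₀, ρ₀ ∈ (0,1), set α₀ = (1−ρ₀)(1−δ₀)²/ρ₀ and β₀ = (1−ρ₀)(1−δ₀)/ρ₀, and for n ≥ 3 define t_n = δ₀√(2(1−ρ₀)log n), c_n = √(2(1−ρ₀)log(n)/ρ₀) · (1 − δ₀ − (1/4)·log log n / log n), and ψ_n(s) = φ(s) · Φ((t_n − √ρ₀ s)/√(1−ρ₀))^n. Then there is a constant C > 0 depending only on (δ₀, ρ₀) such that for all sufficiently large n, ∫_{−∞}^{−c_n} ψ_n(s) ds ≤ C · n^{−α₀} · (log n)^{(β₀−1)/2}. -/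

import Mathlib

open MeasureTheory Real Filter

/-- The standard normal density `φ`. -/
noncomputable def stdNormalPDF (s : ℝ) : ℝ :=
  (Real.sqrt (2 * Real.pi))⁻¹ * Real.exp (-s ^ 2 / 2)

/-- The standard normal distribution function `Φ`. -/
noncomputable def stdNormalCDF (x : ℝ) : ℝ :=
  ∫ s in Set.Iic x, stdNormalPDF s

/-- `t_n = δ₀ √(2(1−ρ₀) log n)`. -/
noncomputable def tN (δ₀ ρ₀ : ℝ) (n : ℕ) : ℝ :=
  δ₀ * Real.sqrt (2 * (1 - ρ₀) * Real.log n)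

/-- `c_n = √(2(1−ρ₀)log(n)/ρ₀) · (1 − δ₀ − (1/4)·log log n / log n)`. -/
noncomputable def cN (δ₀ ρ₀ : ℝ) (n : ℕ) : ℝ :=
  Real.sqrt (2 * (1 - ρ₀) * Real.log n / ρ₀) *
    (1 - δ₀ - (1 / 4) * Real.log (Real.log n) / Real.log n)

/-- `ψ_n(s) = φ(s) · Φ((t_n − √ρ₀ s)/√(1−ρ₀))^n`. -/
noncomputable def psiN (δ₀ ρ₀ : ℝ) (n : ℕ) (s : ℝ) : ℝ :=
  stdNormalPDF s *
    stdNormalCDF ((tN δ₀ ρ₀ n - Real.sqrt ρ₀ * s) / Real.sqrt (1 - ρ₀)) ^ n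

/-!
Since `0 ≤ Φ ≤ 1`, the integral is at most `Φ(-c_n)`, and the Gaussian tail bound gives
`Φ(-c_n) ≤ φ(c_n) / c_n`. Expanding the square,
`c_n² / 2 = α₀ log n - (β₀ / 2) log log n + (1 - ρ₀) (log log n)² / (16 ρ₀ log n)`,
whose last term is nonnegative, so `φ(c_n) ≤ n ^ (-α₀) (log n) ^ (β₀ / 2)`. The remaining factor
`(log n) ^ (-1/2)` comes from `1 / c_n`, as `c_n` has order `√(log n)`.
-/

open ProbabilityTheory Topology

theorem stdNormalPDF_eq_gaussianPDFReal : stdNormalPDF = gaussianPDFReal 0 1 := by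
  funext s
  simp [stdNormalPDF, gaussianPDFReal]

theorem stdNormalPDF_nonneg (s : ℝ) : 0 ≤ stdNormalPDF s :=
  stdNormalPDF_eq_gaussianPDFReal ▸ gaussianPDFReal_nonneg 0 1 s

theorem integrable_stdNormalPDF : Integrable stdNormalPDF :=
  stdNormalPDF_eq_gaussianPDFReal ▸ integrable_gaussianPDFReal 0 1

theorem stdNormalPDF_le_exp (s : ℝ) : stdNormalPDF s ≤ exp (-s ^ 2 / 2) := by
  have one_le_sqrt_two_pi : 1 ≤ √(2 * π) := one_le_sqrt.2 (by linarith [pi_gt_three])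
  exact mul_le_of_le_one_left (exp_pos _).le (inv_le_one_of_one_le₀ one_le_sqrt_two_pi)

theorem stdNormalPDF_le_mul_exp (c s : ℝ) :
    stdNormalPDF s ≤ stdNormalPDF c * exp (c * c) * exp (c * s) := by
  have exponent_le : -s ^ 2 / 2 ≤ -c ^ 2 / 2 + c * c + c * s := by
    linarith [sq_nonneg (s + c)]
  calc stdNormalPDF s ≤ (√(2 * π))⁻¹ * exp (-c ^ 2 / 2 + c * c + c * s) := by
        unfold stdNormalPDF
        gcongr
    _ = stdNormalPDF c * exp (c * c) * exp (c * s) := by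
        rw [stdNormalPDF, exp_add, exp_add]
        ring

theorem stdNormalCDF_nonneg (x : ℝ) : 0 ≤ stdNormalCDF x :=
  integral_nonneg stdNormalPDF_nonneg

theorem stdNormalCDF_le_one (x : ℝ) : stdNormalCDF x ≤ 1 :=
  calc stdNormalCDF x ≤ ∫ s, stdNormalPDF s :=
        setIntegral_le_integral integrable_stdNormalPDF (.of_forall stdNormalPDF_nonneg)
    _ = 1 := by
        rw [stdNormalPDF_eq_gaussianPDFReal, integral_gaussianPDFReal_eq_one 0 one_ne_zero]

theorem stdNormalCDF_neg_le_stdNormalPDF_div {c : ℝ} (hc : 0 < c) :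
    stdNormalCDF (-c) ≤ stdNormalPDF c / c :=
  calc stdNormalCDF (-c)
      ≤ ∫ s in Set.Iic (-c), stdNormalPDF c * exp (c * c) * exp (c * s) :=
        integral_mono integrable_stdNormalPDF.integrableOn
          ((integrableOn_exp_mul_Iic hc _).const_mul _) (stdNormalPDF_le_mul_exp c)
    _ = stdNormalPDF c * (exp (c * c) * exp (-(c * c))) / c := by
        rw [integral_const_mul, integral_exp_mul_Iic hc, mul_neg]
        ring
    _ = stdNormalPDF c / c := by rw [← exp_add, add_neg_cancel, exp_zero, mul_one]

theorem psiN_nonneg (δ ρ : ℝ) (n : ℕ) (s : ℝ) : 0 ≤ psiN δ ρ n s :=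
  mul_nonneg (stdNormalPDF_nonneg s) (pow_nonneg (stdNormalCDF_nonneg _) n)

theorem psiN_le_stdNormalPDF (δ ρ : ℝ) (n : ℕ) (s : ℝ) : psiN δ ρ n s ≤ stdNormalPDF s :=
  mul_le_of_le_one_right (stdNormalPDF_nonneg s)
    (pow_le_one₀ (stdNormalCDF_nonneg _) (stdNormalCDF_le_one _))

theorem setIntegral_Iic_psiN_le_stdNormalCDF (δ ρ : ℝ) (n : ℕ) (x : ℝ) :
    ∫ s in Set.Iic x, psiN δ ρ n s ≤ stdNormalCDF x :=
  integral_mono_of_nonneg (.of_forall (psiN_nonneg δ ρ n)) integrable_stdNormalPDF.integrableOn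
    (.of_forall (psiN_le_stdNormalPDF δ ρ n))

theorem tendsto_cN_div_sqrt_log (δ ρ : ℝ) :
    Tendsto (fun n : ℕ ↦ cN δ ρ n / √(log n)) atTop (𝓝 (√(2 * (1 - ρ) / ρ) * (1 - δ))) := by
  have log_tendsto : Tendsto (fun n : ℕ ↦ log n) atTop atTop :=
    tendsto_log_atTop.comp tendsto_natCast_atTop_atTop
  have loglog_div_log : Tendsto (fun n : ℕ ↦ log (log n) / log n) atTop (𝓝 0) :=
    isLittleO_log_id_atTop.tendsto_div_nhds_zero.comp log_tendsto
  have main_factor : Tendsto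
      (fun n : ℕ ↦ √(2 * (1 - ρ) / ρ) * (1 - δ - 1 / 4 * (log (log n) / log n))) atTop
      (𝓝 (√(2 * (1 - ρ) / ρ) * (1 - δ))) := by
    simpa only [mul_zero, sub_zero] using
      ((loglog_div_log.const_mul (1 / 4)).const_sub (1 - δ)).const_mul √(2 * (1 - ρ) / ρ)
  refine main_factor.congr' ?_
  filter_upwards [log_tendsto.eventually_gt_atTop 0] with n log_n_pos
  have sqrt_split : √(2 * (1 - ρ) * log n / ρ) = √(2 * (1 - ρ) / ρ) * √(log n) := by
    rw [← sqrt_mul' _ log_n_pos.le, div_mul_eq_mul_div]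
  rw [cN, sqrt_split, mul_right_comm, mul_div_cancel_right₀ _ (sqrt_ne_zero'.2 log_n_pos),
    mul_div_assoc (1 / 4)]

theorem eventually_mul_sqrt_log_le_cN {δ ρ K : ℝ} (hK : K < √(2 * (1 - ρ) / ρ) * (1 - δ)) :
    ∀ᶠ n : ℕ in atTop, K * √(log n) ≤ cN δ ρ n := by
  filter_upwards [(tendsto_cN_div_sqrt_log δ ρ).eventually_const_le hK, eventually_gt_atTop 1]
    with n K_le one_lt_n
  have log_n_pos : 0 < log n := log_pos (mod_cast one_lt_n)
  exact (le_div_iff₀ (sqrt_pos.2 log_n_pos)).1 K_le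

section

variable {δ ρ : ℝ} {n : ℕ}

theorem cN_sq_div_two (hρ : 0 < ρ) (hρ' : ρ ≤ 1) (hn : 1 < n) :
    cN δ ρ n ^ 2 / 2 = (1 - ρ) * (1 - δ) ^ 2 / ρ * log n
      - (1 - ρ) * (1 - δ) / ρ / 2 * log (log n)
      + (1 - ρ) * log (log n) ^ 2 / (16 * ρ * log n) := by
  have log_n_pos : 0 < log n := log_pos (mod_cast hn)
  have radicand_nonneg : 0 ≤ 2 * (1 - ρ) * log n / ρ :=
    div_nonneg (mul_nonneg (mul_nonneg zero_le_two (sub_nonneg.2 hρ')) log_n_pos.le) hρ.le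
  rw [cN, mul_pow, sq_sqrt radicand_nonneg]
  field_simp
  ring

theorem stdNormalPDF_cN_le (hρ : 0 < ρ) (hρ' : ρ ≤ 1) (hn : 1 < n) :
    stdNormalPDF (cN δ ρ n) ≤
      (n : ℝ) ^ (-((1 - ρ) * (1 - δ) ^ 2 / ρ)) * log n ^ ((1 - ρ) * (1 - δ) / ρ / 2) := by
  have log_n_pos : 0 < log n := log_pos (mod_cast hn)
  have n_pos : (0 : ℝ) < n := mod_cast (zero_lt_one.trans hn)
  have remainder_nonneg : 0 ≤ (1 - ρ) * log (log n) ^ 2 / (16 * ρ * log n) :=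
    div_nonneg (mul_nonneg (sub_nonneg.2 hρ') (sq_nonneg _)) (by positivity)
  rw [rpow_def_of_pos n_pos, rpow_def_of_pos log_n_pos, ← exp_add]
  refine (stdNormalPDF_le_exp _).trans (exp_le_exp.2 ?_)
  linarith [cN_sq_div_two (δ := δ) hρ hρ' hn]

theorem stdNormalCDF_neg_cN_le {K : ℝ} (hρ : 0 < ρ) (hρ' : ρ ≤ 1) (hn : 1 < n) (hK : 0 < K)
    (hKc : K * √(log n) ≤ cN δ ρ n) :
    stdNormalCDF (-cN δ ρ n) ≤ K⁻¹ * (n : ℝ) ^ (-((1 - ρ) * (1 - δ) ^ 2 / ρ))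
      * log n ^ (((1 - ρ) * (1 - δ) / ρ - 1) / 2) := by
  have log_n_pos : 0 < log n := log_pos (mod_cast hn)
  have lower_pos : 0 < K * √(log n) := by positivity
  calc stdNormalCDF (-cN δ ρ n)
      ≤ stdNormalPDF (cN δ ρ n) / cN δ ρ n :=
        stdNormalCDF_neg_le_stdNormalPDF_div (lower_pos.trans_le hKc)
    _ ≤ (n : ℝ) ^ (-((1 - ρ) * (1 - δ) ^ 2 / ρ)) * log n ^ ((1 - ρ) * (1 - δ) / ρ / 2)
          / (K * √(log n)) := by
        gcongr
        exact stdNormalPDF_cN_le hρ hρ' hn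
    _ = K⁻¹ * (n : ℝ) ^ (-((1 - ρ) * (1 - δ) ^ 2 / ρ))
          * log n ^ (((1 - ρ) * (1 - δ) / ρ - 1) / 2) := by
        rw [sub_div, rpow_sub log_n_pos, ← sqrt_eq_rpow]
        field_simp

end

theorem psi_integral_far_left_tail_upper_bound_general (δ₀ ρ₀ : ℝ)
    (hδ : δ₀ < 1) (hρ : ρ₀ ∈ Set.Ioo (0 : ℝ) 1) :
    ∃ C : ℝ, 0 < C ∧
      ∀ᶠ n : ℕ in atTop,
        ∫ s in Set.Iic (-(cN δ₀ ρ₀ n)), psiN δ₀ ρ₀ n s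
          ≤ C * (n : ℝ) ^ (-((1 - ρ₀) * (1 - δ₀) ^ 2 / ρ₀))
              * Real.log n ^ (((1 - ρ₀) * (1 - δ₀) / ρ₀ - 1) / 2) := by
  obtain ⟨ρ_pos, ρ_lt_one⟩ := hρ
  have limit_pos : 0 < √(2 * (1 - ρ₀) / ρ₀) * (1 - δ₀) :=
    mul_pos (sqrt_pos.2 (div_pos (mul_pos two_pos (sub_pos.2 ρ_lt_one)) ρ_pos)) (sub_pos.2 hδ)
  obtain ⟨K, K_pos, K_lt⟩ := exists_between limit_pos
  refine ⟨K⁻¹, inv_pos.2 K_pos, ?_⟩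
  filter_upwards [eventually_mul_sqrt_log_le_cN K_lt, eventually_gt_atTop 1] with n K_le one_lt_n
  exact (setIntegral_Iic_psiN_le_stdNormalCDF δ₀ ρ₀ n _).trans
    (stdNormalCDF_neg_cN_le ρ_pos ρ_lt_one.le one_lt_n K_pos K_le)

theorem psi_integral_far_left_tail_upper_bound (δ₀ ρ₀ : ℝ)
    (hδ : δ₀ ∈ Set.Ioo (0 : ℝ) 1) (hρ : ρ₀ ∈ Set.Ioo (0 : ℝ) 1) :
    ∃ C : ℝ, 0 < C ∧
      ∀ᶠ n : ℕ in atTop,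
        ∫ s in Set.Iic (-(cN δ₀ ρ₀ n)), psiN δ₀ ρ₀ n s
          ≤ C * (n : ℝ) ^ (-((1 - ρ₀) * (1 - δ₀) ^ 2 / ρ₀))
              * Real.log n ^ (((1 - ρ₀) * (1 - δ₀) / ρ₀ - 1) / 2) :=
  psi_integral_far_left_tail_upper_bound_general δ₀ ρ₀ hδ.2 hρ
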